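/- Let x₁,…,x_N and y₁,…,y_N be points in a metric space S, and let m ≥ 1. For a 1-Lipschitz function h on the quotient space S^m_σ (metrized so that [(z₁,…,z_m)] ↦ (1/m)Σδ_{z_i} is an isometry into Wasserstein-1 space), the quantity |F_h((1/N)Σδ_{x_i}) − F_h((1/N)Σδ_{y_i})| is at most N^{-m} Σ_{i₁,…,i_m ∈ {1,…,N}} d^{(G₁)}((1/m)Σ_k δ_{x_{i_k}}, (1/m)Σ_k δ_{y_{τ(i_k)}}), where τ is any permutation of {1,…,N} and F_h(π) := ∫_{S^m} h(x) π^m(dx). -/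

import Mathlib

open MeasureTheory
open scoped ENNReal NNReal

/-- The Wasserstein (Gini–Monge–Wasserstein) distance of order 1. -/
noncomputable def wasserstein1 {X : Type*} [MeasurableSpace X] (d : X → X → ℝ≥0∞)
    (μ ν : Measure X) : ℝ≥0∞ :=
  sInf {c : ℝ≥0∞ | ∃ γ : Measure (X × X),
    γ.map Prod.fst = μ ∧ γ.map Prod.snd = ν ∧ c = ∫⁻ z, d z.1 z.2 ∂γ}

/-- The uniform empirical measure of a finite tuple of points. -/
noncomputable def empMeas {S : Type*} [MeasurableSpace S] {k : ℕ} (u : Fin k → S) :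
    Measure S :=
  (k : ℝ≥0∞)⁻¹ • ∑ i, Measure.dirac (u i)

/-!
The empirical measure of `y` does not see the order of the points, so `y` may be replaced by
`y ∘ τ`. A product of empirical measures is the uniform measure on all tuples of sample points, so
both integrals become averages over the same multi-indices `i` and can be compared term by term.
-/

section EmpiricalMeasure

variable {S : Type*} [MeasurableSpace S] {N : ℕ}

instance isProbabilityMeasure_empMeas [NeZero N] (x : Fin N → S) :
    IsProbabilityMeasure (empMeas x) where
  measure_univ := by
    simp only [empMeas, Measure.smul_apply, Measure.coe_finsetSum, Finset.sum_apply, measure_univ,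
      Finset.sum_const, Finset.card_univ, Fintype.card_fin, smul_eq_mul, nsmul_eq_mul, mul_one]
    exact ENNReal.inv_mul_cancel (Nat.cast_ne_zero.2 (NeZero.ne N)) (ENNReal.natCast_ne_top N)

theorem empMeas_comp_perm (x : Fin N → S) (τ : Equiv.Perm (Fin N)) :
    empMeas (x ∘ τ) = empMeas x :=
  congrArg ((N : ℝ≥0∞)⁻¹ • ·) (Equiv.sum_comp τ fun j => Measure.dirac (x j))

end EmpiricalMeasure

section Product

variable {ι : Type*} [Fintype ι] {S : ι → Type*} [∀ k, MeasurableSpace (S k)]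

theorem pi_dirac (a : ∀ k, S k) :
    Measure.pi (fun k => Measure.dirac (a k)) = Measure.dirac a := by
  classical
  refine Measure.pi_eq fun A hA => ?_
  simp only [Measure.dirac_apply' _ (MeasurableSet.univ_pi hA), Measure.dirac_apply' _ (hA _),
    Set.indicator_apply, Pi.one_apply, Set.mem_univ_pi, Finset.prod_ite_zero,
    Finset.prod_const_one, Finset.mem_univ, true_imp_iff]

variable [DecidableEq ι] {N : ι → ℕ} [∀ k, NeZero (N k)]

theorem pi_empMeas (x : ∀ k, Fin (N k) → S k) :
    Measure.pi (fun k => empMeas (x k))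
      = (∏ k, (N k : ℝ≥0∞)⁻¹) • ∑ i : ∀ k, Fin (N k), Measure.dirac fun k => x k (i k) := by
  refine Measure.pi_eq fun A _ => ?_
  simp only [← pi_dirac, empMeas, Measure.smul_apply, Measure.coe_finsetSum, Finset.sum_apply,
    Measure.pi_pi, smul_eq_mul, Finset.prod_mul_distrib, Finset.prod_univ_sum,
    Fintype.piFinset_univ]

variable {E : Type*} [NormedAddCommGroup E] [NormedSpace ℝ E]

theorem integral_pi_empMeas [CompleteSpace E] [∀ k, MeasurableSingletonClass (S k)]
    (x : ∀ k, Fin (N k) → S k) (h : (∀ k, S k) → E) :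
    ∫ z, h z ∂(Measure.pi fun k => empMeas (x k))
      = (∏ k, (N k : ℝ))⁻¹ • ∑ i : ∀ k, Fin (N k), h fun k => x k (i k) := by
  rw [pi_empMeas, integral_smul_measure,
    integral_finsetSum_measure fun _ _ => integrable_dirac enorm_lt_top]
  simp only [integral_dirac, ENNReal.toReal_prod, ENNReal.toReal_inv, ENNReal.toReal_natCast,
    Finset.prod_inv_distrib]

theorem stmt_12_general [CompleteSpace E] [∀ k, MeasurableSingletonClass (S k)]
    (x y : ∀ k, Fin (N k) → S k) (τ : ∀ k, Equiv.Perm (Fin (N k)))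
    (h : (∀ k, S k) → E) (c : (∀ k, S k) → (∀ k, S k) → ℝ)
    (hc : ∀ u v, ‖h u - h v‖ ≤ c u v) :
    ‖(∫ z, h z ∂(Measure.pi fun k => empMeas (x k)))
        - ∫ z, h z ∂(Measure.pi fun k => empMeas (y k))‖
      ≤ (∏ k, (N k : ℝ))⁻¹ * ∑ i : ∀ k, Fin (N k),
          c (fun k => x k (i k)) (fun k => y k (τ k (i k))) := by
  calc
    _ = ‖(∫ z, h z ∂(Measure.pi fun k => empMeas (x k)))
          - ∫ z, h z ∂(Measure.pi fun k => empMeas (y k ∘ τ k))‖ := by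
      simp only [empMeas_comp_perm]
    _ = (∏ k, (N k : ℝ))⁻¹ * ‖∑ i : ∀ k, Fin (N k),
          (h (fun k => x k (i k)) - h (fun k => y k (τ k (i k))))‖ := by
      rw [integral_pi_empMeas, integral_pi_empMeas, ← smul_sub, ← Finset.sum_sub_distrib,
        norm_smul_of_nonneg (by positivity)]
      rfl
    _ ≤ _ := by
      gcongr
      exact norm_sum_le_of_le _ fun i _ => hc _ _

end Product

/-- For points `x₁,…,x_N`, `y₁,…,y_N` in a metric space `S`, a permutation `τ` of
`{1,…,N}`, and a function `h` on `S^m` which is symmetric and 1-Lipschitz for the metric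
of the quotient `S^m_σ` (isometric to Wasserstein-1 space via empirical measures),
`|F_h((1/N)Σδ_{xᵢ}) − F_h((1/N)Σδ_{yᵢ})|
   ≤ N^{−m} Σ_{i₁,…,i_m} d^{(G₁)}((1/m)Σ_k δ_{x_{i_k}}, (1/m)Σ_k δ_{y_{τ(i_k)}})`,
where `F_h(π) := ∫_{S^m} h dπ^m`. -/
theorem stmt_12 {S : Type*} [MetricSpace S] [MeasurableSpace S] [BorelSpace S]
    (N m : ℕ) (hN : 1 ≤ N) (hm : 1 ≤ m)
    (x y : Fin N → S) (τ : Equiv.Perm (Fin N))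
    (h : (Fin m → S) → ℝ) (hmeas : Measurable h)
    (hsymm : ∀ (u : Fin m → S) (π : Equiv.Perm (Fin m)), h (u ∘ π) = h u)
    (hlip : ∀ u v : Fin m → S,
      |h u - h v| ≤ (wasserstein1 (fun a b => edist a b) (empMeas u) (empMeas v)).toReal) :
    |(∫ z, h z ∂(Measure.pi fun _ : Fin m => empMeas x))
        - ∫ z, h z ∂(Measure.pi fun _ : Fin m => empMeas y)|
      ≤ ((N : ℝ) ^ m)⁻¹ * ∑ i : Fin m → Fin N,
          (wasserstein1 (fun a b => edist a b)
            (empMeas fun k => x (i k)) (empMeas fun k => y (τ (i k)))).toReal := by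
  have : NeZero N := ⟨by lia⟩
  simpa only [Finset.prod_const, Finset.card_univ, Fintype.card_fin, Real.norm_eq_abs] using
    stmt_12_general (fun _ => x) (fun _ => y) (fun _ => τ) h _ hlip
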